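/- arXiv:2304.13735 — 4 statements merged into one kernel-verified Lean document; each statement's English description precedes it below -/
import Mathlib

section
/- Let p be a prime, q a power of p, M ≥ 2 an integer, d ≥ 1 and l a divisor of d. Then the number of β ∈ F_{q^{2d}} satisfying β^{q^d+1} = 1 and β^M ∈ F_{q^{2d/l}} equals gcd(M·(q^{2d/l}−1), q^d+1). -/
open Polynomial Matrix

noncomputable section

/-- `f̃(t) = conj(f(0))⁻¹ · t^(deg f) · f̄(1/t)`, where the conjugation `σ` is applied
coefficientwise. -/
def tildePoly {F : Type} [Field F] (σ : F →+* F) (f : F[X]) : F[X] :=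
  Polynomial.C (σ (f.coeff 0))⁻¹ * (f.map σ).reverse

/-- A self-conjugate irreducible monic (SCIM) polynomial with nonzero constant term. -/
def IsSCIM {F : Type} [Field F] (σ : F →+* F) (f : F[X]) : Prop :=
  f.Monic ∧ Irreducible f ∧ f.coeff 0 ≠ 0 ∧ tildePoly σ f = f

/-- An `M̃`-power polynomial: a SCIM polynomial `f` such that `f(x^M)` has a SCIM factor of
degree `deg f`. -/
def IsMtildePowerPoly {F : Type} [Field F] (σ : F →+* F) (M : ℕ) (f : F[X]) : Prop :=
  IsSCIM σ f ∧ ∃ g : F[X], IsSCIM σ g ∧ g.natDegree = f.natDegree ∧ g ∣ f.comp (X ^ M)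

/-- `Ñ_M(q,d)`: the number of `M̃`-power SCIM polynomials of degree `d`. -/
def NtildeM {F : Type} [Field F] (σ : F →+* F) (M d : ℕ) : ℕ :=
  Nat.card {f : F[X] // IsMtildePowerPoly σ M f ∧ f.natDegree = d}

/-- An `M`-power polynomial: a monic irreducible `g` such that `g(x^M)` has an irreducible
factor of degree `deg g`. -/
def IsMPowerPoly {F : Type} [Field F] (M : ℕ) (g : F[X]) : Prop :=
  g.Monic ∧ Irreducible g ∧
    ∃ h : F[X], Irreducible h ∧ h.natDegree = g.natDegree ∧ h ∣ g.comp (X ^ M)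

open scoped Classical in
/-- `R̃_M(q,d)`: the number of unordered pairs `{g, g̃}` with `g` a monic irreducible
degree-`d` `M`-power polynomial and `g ≠ g̃`. -/
def RtildeM {F : Type} [Field F] (σ : F →+* F) (M d : ℕ) : ℕ :=
  Nat.card {P : Finset F[X] // ∃ g : F[X], IsMPowerPoly M g ∧ g.natDegree = d ∧
    g ≠ tildePoly σ g ∧ P = {g, tildePoly σ g}}

/-- `S̃'_M(d,q)`: the number of SCIM polynomials of degree `d` that are not `M̃`-power
polynomials. -/
def StildePrimeM {F : Type} [Field F] (σ : F →+* F) (M d : ℕ) : ℕ :=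
  Nat.card {f : F[X] // IsSCIM σ f ∧ f.natDegree = d ∧ ¬ IsMtildePowerPoly σ M f}

open scoped Classical in
/-- `S'_M(d,q)`: the number of unordered pairs `{g, g̃}` with `g` monic irreducible of
degree `d`, `g ≠ g̃`, and `g` not an `M`-power polynomial. -/
def SPrimeM {F : Type} [Field F] (σ : F →+* F) (M d : ℕ) : ℕ :=
  Nat.card {P : Finset F[X] // ∃ g : F[X], g.Monic ∧ Irreducible g ∧ g.natDegree = d ∧
    g ≠ tildePoly σ g ∧ ¬ IsMPowerPoly M g ∧ P = {g, tildePoly σ g}}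

/-- The anti-diagonal matrix `Λ_n` with all anti-diagonal entries `1`. -/
def antidiagMat (F : Type) [Field F] (n : ℕ) : Matrix (Fin n) (Fin n) F :=
  Matrix.of fun i j => if (i : ℕ) + (j : ℕ) = n - 1 then 1 else 0

/-- Membership in the unitary group `U(n,q²)`:
`A` invertible and `A · Λ_n · Āᵗ = Λ_n`, where `Ā` applies `σ` entrywise. -/
def IsUnitaryMat {F : Type} [Field F] (σ : F →+* F) {n : ℕ}
    (A : Matrix (Fin n) (Fin n) F) : Prop :=
  IsUnit A ∧ A * antidiagMat F n * (A.map σ)ᵀ = antidiagMat F n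

/-- The companion matrix of a polynomial of degree `d`. -/
def companionMat {F : Type} [Field F] (d : ℕ) (f : F[X]) : Matrix (Fin d) (Fin d) F :=
  Matrix.of fun i j =>
    if (j : ℕ) = d - 1 then -f.coeff i else if (i : ℕ) = (j : ℕ) + 1 then 1 else 0

/-- Conjugacy in the general linear group. -/
def ConjGL {F : Type} [Field F] {m : Type} [Fintype m] [DecidableEq m]
    (A B : Matrix m m F) : Prop :=
  ∃ P : Matrix m m F, IsUnit P ∧ B = P * A * P⁻¹

/-- Conjugacy in the unitary group. -/
def ConjU {F : Type} [Field F] (σ : F →+* F) {n : ℕ}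
    (A B : Matrix (Fin n) (Fin n) F) : Prop :=
  ∃ P : Matrix (Fin n) (Fin n) F, IsUnitaryMat σ P ∧ B = P * A * P⁻¹

/-- `A` is an `M`-th power in the unitary group. -/
def IsMPowerInU {F : Type} [Field F] (σ : F →+* F) (M : ℕ) {n : ℕ}
    (A : Matrix (Fin n) (Fin n) F) : Prop :=
  ∃ B : Matrix (Fin n) (Fin n) F, IsUnitaryMat σ B ∧ B ^ M = A

/-- `|U(n,q²)|`. -/
def cardU {F : Type} [Field F] (σ : F →+* F) (n : ℕ) : ℕ :=
  Nat.card {A : Matrix (Fin n) (Fin n) F // IsUnitaryMat σ A}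

/-- Number of conjugacy classes of separable matrices in `U(n,q²)` that are `M`-th powers. -/
def numSepPowerClasses {F : Type} [Field F] (σ : F →+* F) (M n : ℕ) : ℕ :=
  Nat.card (Quot (fun A B : {A : Matrix (Fin n) (Fin n) F // IsUnitaryMat σ A ∧
    Squarefree (Matrix.charpoly A) ∧ IsMPowerInU σ M A} => ConjU σ A.1 B.1))

/-- Number of separable matrices in `U(n,q²)` that are `M`-th powers. -/
def numSepPowerElts {F : Type} [Field F] (σ : F →+* F) (M n : ℕ) : ℕ :=
  Nat.card {A : Matrix (Fin n) (Fin n) F // IsUnitaryMat σ A ∧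
    Squarefree (Matrix.charpoly A) ∧ IsMPowerInU σ M A}

/-- Number of conjugacy classes of cyclic matrices in `U(n,q²)` that are `M`-th powers. -/
def numCycPowerClasses {F : Type} [Field F] (σ : F →+* F) (M n : ℕ) : ℕ :=
  Nat.card (Quot (fun A B : {A : Matrix (Fin n) (Fin n) F // IsUnitaryMat σ A ∧
    minpoly F A = Matrix.charpoly A ∧ IsMPowerInU σ M A} => ConjU σ A.1 B.1))

/-- Number of cyclic matrices in `U(n,q²)` that are `M`-th powers. -/
def numCycPowerElts {F : Type} [Field F] (σ : F →+* F) (M n : ℕ) : ℕ :=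
  Nat.card {A : Matrix (Fin n) (Fin n) F // IsUnitaryMat σ A ∧
    minpoly F A = Matrix.charpoly A ∧ IsMPowerInU σ M A}

/-- Number of conjugacy classes of semisimple matrices in `U(n,q²)` that are `M`-th powers. -/
def numSSPowerClasses {F : Type} [Field F] (σ : F →+* F) (M n : ℕ) : ℕ :=
  Nat.card (Quot (fun A B : {A : Matrix (Fin n) (Fin n) F // IsUnitaryMat σ A ∧
    Squarefree (minpoly F A) ∧ IsMPowerInU σ M A} => ConjU σ A.1 B.1))

/-- Number of semisimple matrices in `U(n,q²)` that are `M`-th powers. -/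
def numSSPowerElts {F : Type} [Field F] (σ : F →+* F) (M n : ℕ) : ℕ :=
  Nat.card {A : Matrix (Fin n) (Fin n) F // IsUnitaryMat σ A ∧
    Squarefree (minpoly F A) ∧ IsMPowerInU σ M A}

/-- `U(f,n)`: block matrix with `n` diagonal blocks `C_f` (of size `k = deg f`) and
identity blocks directly above the diagonal. -/
def blockJordan {F : Type} [Field F] (k n : ℕ) (f : F[X]) :
    Matrix (Fin n × Fin k) (Fin n × Fin k) F :=
  Matrix.of fun ai bj =>
    if ai.1 = bj.1 then companionMat k f ai.2 bj.2
    else if (bj.1 : ℕ) = (ai.1 : ℕ) + 1 then (if ai.2 = bj.2 then 1 else 0) else 0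

/-- `|U(m, q^{2d})| = q^{d·m(m−1)}·Π_{i=1}^m (q^{di} − (−1)^i)` as a rational number. -/
def cardUFormula (q d m : ℕ) : ℚ :=
  (q : ℚ) ^ (d * (m * (m - 1))) * ∏ i ∈ Finset.Icc 1 m, ((q : ℚ) ^ (d * i) - (-1 : ℚ) ^ i)

/-- `|GL(m, q^{2d})| = Π_{i=0}^{m−1} (q^{2dm} − q^{2di})` as a rational number. -/
def cardGLFormula (q d m : ℕ) : ℚ :=
  ∏ i ∈ Finset.range m, ((q : ℚ) ^ (2 * d * m) - (q : ℚ) ^ (2 * d * i))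

instance : TopologicalSpace (PowerSeries ℚ) := by
  unfold PowerSeries MvPowerSeries; infer_instance

/-- the number of `β ∈ F_{q^{2d}}` with `β^{q^d+1} = 1` and
`β^M ∈ F_{q^{2d/l}}` (i.e. `β^M` fixed by `x ↦ x^{q^{2d/l}}`) is
`gcd(M·(q^{2d/l}−1), q^d+1)`. -/
theorem statement2 (p ℓ q : ℕ) (hp : p.Prime) (hℓ : 0 < ℓ) (hq : q = p ^ ℓ)
    (M : ℕ) (hM : 2 ≤ M) (d : ℕ) (hd : 1 ≤ d) (l : ℕ) (hl : l ∣ d)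
    (E : Type) [Field E] [Fintype E] (hE : Fintype.card E = q ^ (2 * d)) :
    Nat.card {β : E // β ^ (q ^ d + 1) = 1 ∧ (β ^ M) ^ (q ^ (2 * d / l)) = β ^ M}
      = Nat.gcd (M * (q ^ (2 * d / l) - 1)) (q ^ d + 1) := by
  have hq0 : 0 < q := by rw [hq]; exact pow_pos hp.pos _
  set n := Nat.gcd (M * (q ^ (2 * d / l) - 1)) (q ^ d + 1) with hn
  have hcard : Nat.card Eˣ = q ^ (2 * d) - 1 := by
    rw [Nat.card_units, Nat.card_eq_fintype_card, hE]
  have hdvd : n ∣ Nat.card Eˣ := by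
    rw [hcard]
    refine (Nat.gcd_dvd_right _ _).trans ⟨q ^ d - 1, ?_⟩
    rw [mul_comm 2 d, pow_mul, ← Nat.sq_sub_sq, one_pow]
  have key : ∀ u : Eˣ, u ^ n = 1 ↔
      ((u : E) ^ (q ^ d + 1) = 1 ∧ ((u : E) ^ M) ^ (q ^ (2 * d / l)) = (u : E) ^ M) := by
    intro u
    have h1 : (u : E) ^ (q ^ d + 1) = 1 ↔ u ^ (q ^ d + 1) = 1 := by
      rw [← Units.val_pow_eq_pow_val, Units.val_eq_one]
    have h2 : ((u : E) ^ M) ^ (q ^ (2 * d / l)) = (u : E) ^ M ↔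
        u ^ (M * (q ^ (2 * d / l) - 1)) = 1 := by
      obtain ⟨k, hk⟩ : ∃ k, q ^ (2 * d / l) = k + 1 :=
        ⟨q ^ (2 * d / l) - 1, (Nat.sub_add_cancel (pow_pos hq0 _)).symm⟩
      rw [hk, Nat.add_sub_cancel, pow_mul, pow_succ]
      constructor
      · intro h
        have : (u ^ M) ^ k * u ^ M = u ^ M := by ext; push_cast; exact h
        exact mul_eq_right.mp this
      · intro h
        have : ((u : E) ^ M) ^ k = 1 := by simpa using congrArg Units.val h
        rw [this, one_mul]
    rw [h1, h2, ← orderOf_dvd_iff_pow_eq_one, ← orderOf_dvd_iff_pow_eq_one,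
      ← orderOf_dvd_iff_pow_eq_one, hn, Nat.dvd_gcd_iff, and_comm]
  have hker := IsCyclic.card_powMonoidHom_ker (G := Eˣ) n
  rw [Nat.gcd_eq_right hdvd] at hker
  rw [← hker]
  symm
  refine Nat.card_congr (Equiv.ofBijective
    (fun u => ⟨((u : Eˣ) : E), (key u.1).1 u.2⟩) ⟨?_, ?_⟩)
  · intro u v h
    exact Subtype.ext (Units.ext (congrArg Subtype.val h))
  · rintro ⟨b, hb⟩
    have hb0 : b ≠ 0 := by
      rintro rfl
      have := hb.1
      simp at this
    exact ⟨⟨Units.mk0 b hb0, (key (Units.mk0 b hb0)).2 hb⟩, rfl⟩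
end
end

section
/- Let p be a prime, q a power of p, M ≥ 2 an integer, and f a SCIM polynomial of odd degree d ≥ 1 over F_{q^2}. If there exists α ∈ U(d,q²) with α^M conjugate to the companion matrix C_f of f, then f(x^M) has a SCIM factor of degree d. -/
open Polynomial Matrix

noncomputable section

lemma aux_companion {F : Type} [Field F] (S : Type) [CommRing S] [Algebra F S]
    (pb : PowerBasis F S) (f : F[X]) (hf : minpoly F pb.gen = f) (d : ℕ) (hd : pb.dim = d)
    (hd1 : 1 ≤ d) : aeval (companionMat d f) f = 0 := by
  subst hd
  have h : companionMat pb.dim f = Algebra.leftMulMatrix pb.basis pb.gen := by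
    rw [PowerBasis.leftMulMatrix, pb.minpolyGen_eq, hf]
    ext i j
    simp only [companionMat, Matrix.of_apply]
    have : (j : ℕ) = pb.dim - 1 ↔ (j : ℕ) + 1 = pb.dim := by omega
    simp only [this]
  rw [h, aeval_algHom_apply, ← hf, minpoly.aeval, map_zero]

lemma aux_antidiag (F : Type) [Field F] (n : ℕ) : antidiagMat F n * antidiagMat F n = 1 := by
  ext i j
  rw [Matrix.mul_apply, Finset.sum_eq_single (Fin.rev i)]
  · simp only [antidiagMat, Matrix.of_apply, Fin.val_rev, Matrix.one_apply, Fin.ext_iff]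
    have h1 : (i : ℕ) + (n - (i + 1)) = n - 1 := by omega
    have h2 : (n - ((i : ℕ) + 1)) + (j : ℕ) = n - 1 ↔ (i : ℕ) = j := by omega
    simp [h1, h2]
  · intro b _ hb
    have : ¬ ((i : ℕ) + b = n - 1) := by
      intro h
      apply hb
      ext
      rw [Fin.val_rev]
      omega
    simp [antidiagMat, this]
  · simp

lemma aux_tilde {F : Type} [Field F] (σ : F →+* F) {n : ℕ} (A : Matrix (Fin n) (Fin n) F)
    (hA : IsUnitaryMat σ A) : tildePoly σ A.charpoly = A.charpoly := by
  obtain ⟨hu, h⟩ := hA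
  set L := antidiagMat F n with hL
  set B := (A.map σ)ᵀ with hB
  have hLL : L * L = 1 := aux_antidiag F n
  have hdB : B.det = σ A.det := by
    rw [hB, Matrix.det_transpose, ← RingHom.mapMatrix_apply, ← RingHom.map_det]
  have hdA : IsUnit A.det := (Matrix.isUnit_iff_isUnit_det A).1 hu
  have hBu : IsUnit B := by
    rw [Matrix.isUnit_iff_isUnit_det, hdB]
    exact hdA.map σ
  have hBd : IsUnit B.det := (Matrix.isUnit_iff_isUnit_det B).1 hBu
  have hAe : A = L * B⁻¹ * L := by
    calc A = A * L * (B * B⁻¹) * L := by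
            rw [Matrix.mul_nonsing_inv _ hBd, mul_one, mul_assoc, hLL, mul_one]
      _ = (A * L * B) * B⁻¹ * L := by simp only [mul_assoc]
      _ = _ := by rw [h]
  have hc : A.charpoly = B⁻¹.charpoly := by
    conv_lhs => rw [hAe]
    rw [Matrix.charpoly_mul_comm, ← mul_assoc, hLL, one_mul]
  have hrev : B.charpolyRev = (A.charpoly.map σ).reverse := by
    rw [← Matrix.reverse_charpoly, hB, Matrix.charpoly_transpose, Matrix.charpoly_map]
  have hs : A.charpoly.coeff 0 = (-1) ^ n * A.det := by
    rw [Matrix.det_eq_sign_charpoly_coeff, Fintype.card_fin, ← mul_assoc, ← mul_pow]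
    simp
  conv_rhs => rw [hc, Matrix.charpoly_inv B hBu, hrev]
  rw [tildePoly, hs, hdB]
  congr 1
  simp [Ring.inverse_eq_inv, ← inv_pow, inv_neg, mul_comm]

lemma aux_irred {F : Type} [Field F] (M d : ℕ) (hd : 1 ≤ d)
    (f : F[X]) (hm : f.Monic) (hi : Irreducible f) (hfd : f.natDegree = d)
    (A : Matrix (Fin d) (Fin d) F) (h0 : aeval (A ^ M) f = 0) :
    Irreducible A.charpoly ∧ A.charpoly ∣ f.comp (X ^ M) := by
  haveI : Nonempty (Fin d) := ⟨⟨0, hd⟩⟩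
  have hmd : minpoly F A ∣ f.comp (X ^ M) := by
    apply minpoly.dvd
    rw [aeval_comp]
    simpa using h0
  have hint : IsIntegral F A := Matrix.isIntegral A
  obtain ⟨h, hh, hdvd⟩ := WfDvdMonoid.exists_irreducible_factor
    (minpoly.not_isUnit F A) (minpoly.ne_zero hint)
  haveI := Fact.mk hh
  have hr : aeval (AdjoinRoot.root h ^ M) f = 0 := by
    have : aeval (AdjoinRoot.root h) (f.comp (X ^ M)) = 0 := by
      rw [AdjoinRoot.aeval_eq, AdjoinRoot.mk_eq_zero]
      exact hdvd.trans hmd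
    rw [aeval_comp] at this
    simpa using this
  have hmin := minpoly.eq_of_irreducible_of_monic hi hr hm
  haveI : Module.Finite F (AdjoinRoot h) := (AdjoinRoot.powerBasis hh.ne_zero).finite
  have hle : d ≤ h.natDegree := by
    have := minpoly.natDegree_le (A := F) (AdjoinRoot.root h ^ M)
    rw [← hmin, hfd, (AdjoinRoot.powerBasis hh.ne_zero).finrank,
      AdjoinRoot.powerBasis_dim] at this
    exact this
  have hdc : h ∣ A.charpoly := hdvd.trans (Matrix.minpoly_dvd_charpoly A)
  have hcd : A.charpoly.natDegree = d := by simp [Matrix.charpoly_natDegree_eq_dim]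
  have hass : Associated h A.charpoly :=
    associated_of_dvd_of_natDegree_le hdc A.charpoly_monic.ne_zero (by omega)
  exact ⟨hass.irreducible hh, hass.symm.dvd.trans (hdvd.trans hmd)⟩

/-- if the companion matrix of a SCIM polynomial `f` of odd degree `d` has an
`M`-th root in `U(d,q²)` (up to conjugacy), then `f(x^M)` has a SCIM factor of degree `d`. -/
theorem statement4 (p ℓ q : ℕ) (hp : p.Prime) (hℓ : 0 < ℓ) (hq : q = p ^ ℓ)
    (F : Type) [Field F] [Fintype F] (hF : Fintype.card F = q ^ 2)
    (σ : F →+* F) (hσ : ∀ x : F, σ x = x ^ q)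
    (M : ℕ) (hM : 2 ≤ M) (d : ℕ) (hd : 1 ≤ d) (hodd : Odd d)
    (f : F[X]) (hf : IsSCIM σ f) (hfd : f.natDegree = d)
    (α : Matrix (Fin d) (Fin d) F) (hα : IsUnitaryMat σ α)
    (hconj : ConjGL (α ^ M) (companionMat d f)) :
    ∃ g : F[X], IsSCIM σ g ∧ g.natDegree = d ∧ g ∣ f.comp (X ^ M) := by
  obtain ⟨hm, hi, hc0, -⟩ := hf
  have hcomp : aeval (companionMat d f) f = 0 :=
    aux_companion (AdjoinRoot f) (AdjoinRoot.powerBasis hm.ne_zero) f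
      (AdjoinRoot.minpoly_powerBasis_gen_of_monic hm) d
      (by rw [AdjoinRoot.powerBasis_dim, hfd]) hd
  obtain ⟨P, hP, hPe⟩ := hconj
  have hPd : IsUnit P.det := (Matrix.isUnit_iff_isUnit_det P).1 hP
  have h0 : aeval (α ^ M) f = 0 := by
    have e : α ^ M = P⁻¹ * companionMat d f * P := by
      rw [hPe]
      simp only [mul_assoc, Matrix.nonsing_inv_mul _ hPd, mul_one]
      rw [← mul_assoc, Matrix.nonsing_inv_mul _ hPd, one_mul]
    have key : ∀ k : ℕ, (P⁻¹ * companionMat d f * P) ^ k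
        = P⁻¹ * companionMat d f ^ k * P := by
      intro k
      induction k with
      | zero => simp [Matrix.nonsing_inv_mul _ hPd]
      | succ k ih =>
        rw [pow_succ, ih, pow_succ]
        calc _ = P⁻¹ * companionMat d f ^ k * (P * P⁻¹) * companionMat d f * P := by
              simp only [mul_assoc]
          _ = _ := by rw [Matrix.mul_nonsing_inv _ hPd]; simp only [mul_assoc, one_mul]
    have : aeval (α ^ M) f = P⁻¹ * aeval (companionMat d f) f * P := by
      rw [e, aeval_eq_sum_range, aeval_eq_sum_range, Finset.mul_sum, Finset.sum_mul]
      refine Finset.sum_congr rfl fun k _ => ?_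
      rw [key, Matrix.mul_smul, Matrix.smul_mul]
    rw [this, hcomp, mul_zero, zero_mul]
  obtain ⟨h1, h2⟩ := aux_irred M d hd f hm hi hfd α h0
  refine ⟨α.charpoly, ⟨α.charpoly_monic, h1, ?_, aux_tilde σ α hα⟩, ?_, h2⟩
  · intro h
    have := (Matrix.isUnit_iff_isUnit_det α).1 hα.1
    rw [Matrix.det_eq_sign_charpoly_coeff, h, mul_zero] at this
    exact not_isUnit_zero this
  · simp [Matrix.charpoly_natDegree_eq_dim]
end
end

section
/- Let p be a prime, q a power of p, and M ≥ 2 an integer with gcd(M,q) = 1. Let f and g be monic polynomials of degree k over F_{q^2} with nonzero constant term such that U(f,1)^M = C_f^M is conjugate in GL(k, F_{q^2}) to U(g,1) = C_g. Then for every n ≥ 1, U(f,n)^M is conjugate in GL(nk, F_{q^2}) to U(g,n). -/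
open Polynomial Matrix

noncomputable section

/-- scalar nilpotent shift -/
def shiftN (R : Type) [CommRing R] (n : ℕ) : Matrix (Fin n) (Fin n) R :=
  Matrix.of fun a b => if (b : ℕ) = (a : ℕ) + 1 then 1 else 0

/-- coefficient vector -/
def cvec {R : Type} [CommRing R] (n : ℕ) (s : R[X]) : Fin n → R :=
  fun a => s.coeff (n - 1 - a)

lemma shiftN_mulVec {R : Type} [CommRing R] (n : ℕ) (s : R[X]) :
    shiftN R n *ᵥ cvec n s = cvec n (X * s) := by
  funext a
  simp only [Matrix.mulVec, dotProduct, shiftN, Matrix.of_apply, cvec]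
  by_cases h : (a : ℕ) + 1 < n
  · rw [Finset.sum_eq_single (⟨a + 1, h⟩ : Fin n)]
    · have : n - 1 - (a : ℕ) = (n - 1 - (a + 1)) + 1 := by omega
      rw [this, coeff_X_mul]; simp
    · intro b _ hb
      rw [if_neg, zero_mul]
      intro h'; exact hb (Fin.ext h')
    · simp
  · have : n - 1 - (a : ℕ) = 0 := by omega
    rw [this, Finset.sum_eq_zero]
    · simp
    · intro b _
      rw [if_neg, zero_mul]
      have := b.2; omega

lemma aeval_shiftN_mulVec {R : Type} [CommRing R] (n : ℕ) (r s : R[X]) :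
    (aeval (shiftN R n) r) *ᵥ cvec n s = cvec n (r * s) := by
  induction r using Polynomial.induction_on' generalizing s with
  | add p q hp hq =>
    rw [map_add, Matrix.add_mulVec, hp, hq]
    funext a; simp [cvec, add_mul]
  | monomial m c =>
    rw [aeval_monomial, Algebra.algebraMap_eq_smul_one, smul_mul_assoc, one_mul,
      Matrix.smul_mulVec, ← C_mul_X_pow_eq_monomial]
    have : ∀ m : ℕ, (shiftN R n ^ m) *ᵥ cvec n s = cvec n (X ^ m * s) := by
      intro m
      induction m with
      | zero => simp
      | succ m ih =>
        rw [pow_succ', ← Matrix.mulVec_mulVec, ih, shiftN_mulVec, pow_succ', mul_assoc]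
    rw [this]
    funext a; simp [cvec, mul_assoc]

/-- conjugator -/
def conjP {R : Type} [CommRing R] (n : ℕ) (t : R[X]) : Matrix (Fin n) (Fin n) R :=
  Matrix.of fun a b => cvec n (t ^ (n - 1 - (b : ℕ))) a

lemma conjP_intertwine {R : Type} [CommRing R] (n : ℕ) (h : R[X]) (c : R) :
    aeval (shiftN R n) (X * h + C c) * conjP n (X * h)
      = conjP n (X * h) * (algebraMap R _ c + shiftN R n) := by
  ext a b
  have h1 : (aeval (shiftN R n) (X * h + C c) * conjP n (X * h) : Matrix (Fin n) (Fin n) R) a b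
      = ((aeval (shiftN R n) (X * h + C c)) *ᵥ cvec n ((X * h) ^ (n - 1 - (b : ℕ)))) a := rfl
  rw [h1, aeval_shiftN_mulVec, mul_add, Matrix.add_apply, add_mul, ← pow_succ',
    Algebra.algebraMap_eq_smul_one, mul_smul_comm, mul_one, Matrix.smul_apply]
  have h2 : (conjP n (X * h) * shiftN R n : Matrix (Fin n) (Fin n) R) a b
      = cvec n ((X * h) ^ (n - 1 - (b : ℕ) + 1)) a := by
    rw [Matrix.mul_apply]
    simp only [conjP, shiftN, Matrix.of_apply]
    by_cases hb : (b : ℕ) = 0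
    · rw [Finset.sum_eq_zero]
      · have hn := a.2
        have : n - 1 - (b : ℕ) + 1 = n := by omega
        rw [this, mul_pow, cvec, coeff_X_pow_mul', if_neg (by omega)]
      · intro j _
        rw [if_neg (by omega), mul_zero]
    · have hb2 := b.2
      rw [Finset.sum_eq_single (⟨b - 1, by omega⟩ : Fin n)]
      · rw [if_pos (by simp; omega), mul_one]
        congr 2
        simp; omega
      · intro j _ hj
        rw [if_neg, mul_zero]
        intro h'; apply hj; apply Fin.ext; simp; omega
      · simp
  rw [h2]
  simp only [cvec, conjP, Matrix.of_apply, coeff_add, coeff_C_mul, smul_eq_mul]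
  ring

lemma conjP_det {R : Type} [CommRing R] (n : ℕ) (h : R[X]) :
    (conjP n (X * h)).det = ∏ b : Fin n, (h.coeff 0) ^ (n - 1 - (b : ℕ)) := by
  rw [Matrix.det_of_isUpperTriangular]
  · refine Finset.prod_congr rfl fun b _ => ?_
    simp only [conjP, cvec, Matrix.of_apply, mul_pow]
    rw [coeff_X_pow_mul', if_pos le_rfl, Nat.sub_self, coeff_zero_eq_eval_zero, eval_pow,
      coeff_zero_eq_eval_zero]
  · intro a b hab
    simp only [conjP, cvec, Matrix.of_apply, mul_pow]
    have : (b : ℕ) < a := hab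
    have := a.2
    rw [coeff_X_pow_mul', if_neg (by omega)]

lemma exists_h {R : Type} [CommRing R] (c : R) (M : ℕ) :
    ∃ h : R[X], (X + C c) ^ M = X * h + C (c ^ M) ∧ h.coeff 0 = M * c ^ (M - 1) := by
  refine ⟨((X + C c) ^ M).divX, ?_, ?_⟩
  · conv_lhs => rw [← X_mul_divX_add ((X + C c) ^ M)]
    congr 2
    simp [coeff_zero_eq_eval_zero]
  · rw [coeff_divX, coeff_X_add_C_pow]
    simp [mul_comm]

lemma companion_isUnit {F : Type} [Field F] (k : ℕ) (f : F[X]) (h : f.coeff 0 ≠ 0) :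
    IsUnit (companionMat k f) := by
  rw [← Matrix.vecMul_injective_iff_isUnit]
  refine (injective_iff_map_eq_zero (Matrix.vecMulLinear (companionMat k f))).2 ?_
  intro v hv
  replace hv : v ᵥ* companionMat k f = 0 := hv
  have h1 : ∀ i : Fin k, (i : ℕ) ≠ 0 → v i = 0 := by
    intro i hi
    have hi2 := i.2
    have e := congrFun hv ⟨i - 1, by omega⟩
    simp only [Matrix.vecMul, dotProduct, companionMat, Matrix.of_apply, Pi.zero_apply] at e
    rw [Finset.sum_eq_single i] at e
    · rw [if_neg (by omega), if_pos (by omega), mul_one] at e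
      exact e
    · intro b _ hb
      have : (b : ℕ) ≠ i := fun h' => hb (Fin.ext h')
      rw [if_neg (by omega), if_neg (by omega), mul_zero]
    · simp
  funext i
  by_cases hi : (i : ℕ) = 0
  · have hi2 := i.2
    have e := congrFun hv ⟨k - 1, by omega⟩
    simp only [Matrix.vecMul, dotProduct, companionMat, Matrix.of_apply, Pi.zero_apply] at e
    rw [Finset.sum_eq_single i] at e
    · simpa [hi, h] using e
    · intro b _ hb
      have : (b : ℕ) ≠ i := fun h' => hb (Fin.ext h')
      rw [h1 b (by omega), zero_mul]
    · simp
  · exact h1 i hi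

/-- expansion to a block matrix -/
def expand {F : Type} [Field F] (n k : ℕ) (A : Matrix (Fin k) (Fin k) F) :
    Matrix (Fin n) (Fin n) F[X] →+* Matrix (Fin n × Fin k) (Fin n × Fin k) F :=
  (Matrix.compRingEquiv (Fin n) (Fin k) F).toRingHom.comp
    ((aeval A : F[X] →ₐ[F] _).toRingHom.mapMatrix)

lemma expand_apply {F : Type} [Field F] (n k : ℕ) (A : Matrix (Fin k) (Fin k) F)
    (B : Matrix (Fin n) (Fin n) F[X]) (i j : Fin n × Fin k) :
    expand n k A B i j = (aeval A (B i.1 j.1)) i.2 j.2 := rfl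

/-- block Jordan with arbitrary block -/
def bJ {F : Type} [Field F] (n k : ℕ) (A : Matrix (Fin k) (Fin k) F) :
    Matrix (Fin n × Fin k) (Fin n × Fin k) F :=
  Matrix.of fun ai bj =>
    if ai.1 = bj.1 then A ai.2 bj.2
    else if (bj.1 : ℕ) = (ai.1 : ℕ) + 1 then (if ai.2 = bj.2 then 1 else 0) else 0

lemma expand_jordan {F : Type} [Field F] (n k : ℕ) (A : Matrix (Fin k) (Fin k) F) (s : F[X]) :
    expand n k A (algebraMap _ _ s + shiftN _ n) = bJ n k (aeval A s) := by
  ext ⟨a, i⟩ ⟨b, j⟩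
  rw [expand_apply]
  simp only [Matrix.add_apply, bJ, Matrix.of_apply, shiftN, Matrix.algebraMap_matrix_apply]
  by_cases h : a = b
  · subst h; simp
  · simp only [h, if_false]
    split_ifs <;> simp_all [Matrix.one_apply]

lemma conj_of {F : Type} [Field F] {m : Type} [Fintype m] [DecidableEq m]
    {A B P : Matrix m m F} (hP : IsUnit P) (h : A * P = P * B) : ConjGL A B := by
  have hd := (Matrix.isUnit_iff_isUnit_det _).1 hP
  refine ⟨P⁻¹, by simpa using hP, ?_⟩
  rw [Matrix.nonsing_inv_nonsing_inv _ hd, Matrix.mul_assoc, h, Matrix.nonsing_inv_mul_cancel_left _ _ hd]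

lemma bJ_eq {F : Type} [Field F] (n k : ℕ) (A : Matrix (Fin k) (Fin k) F) :
    bJ n k A = Matrix.compRingEquiv (Fin n) (Fin k) F
      (Matrix.scalar (Fin n) A + Matrix.of fun a b : Fin n => if (b : ℕ) = a + 1 then 1 else 0) := by
  ext ⟨a, i⟩ ⟨b, j⟩
  simp only [bJ, Matrix.of_apply, Matrix.compRingEquiv_apply, Matrix.comp_apply, Matrix.add_apply,
    Matrix.scalar_apply, Matrix.diagonal_apply]
  by_cases h : a = b
  · subst h; simp
  · simp only [h, if_false]
    split_ifs <;> simp_all [Matrix.one_apply]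

lemma bJ_conj {F : Type} [Field F] (n k : ℕ) (A P : Matrix (Fin k) (Fin k) F) (hP : IsUnit P) :
    ConjGL (bJ n k A) (bJ n k (P * A * P⁻¹)) := by
  have hd := (Matrix.isUnit_iff_isUnit_det _).1 hP
  have hP' : IsUnit P⁻¹ := by simpa using hP
  refine conj_of ((hP'.map (Matrix.scalar (Fin n))).map (Matrix.compRingEquiv (Fin n) (Fin k) F)) ?_
  rw [bJ_eq, bJ_eq, ← map_mul, ← map_mul]
  congr 1
  rw [add_mul, mul_add, ← map_mul, ← map_mul]
  congr 1
  · rw [Matrix.mul_assoc, Matrix.nonsing_inv_mul_cancel_left _ _ hd]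
  · ext a b : 2
    simp only [Matrix.scalar_apply, Matrix.mul_diagonal, Matrix.diagonal_mul, Matrix.of_apply]
    split_ifs <;> simp

lemma expand_smul {F : Type} [Field F] (n k : ℕ) (A : Matrix (Fin k) (Fin k) F) (d : F[X]) :
    expand n k A (d • 1) = Matrix.compRingEquiv (Fin n) (Fin k) F
      (Matrix.scalar (Fin n) (aeval A d)) := by
  ext ⟨a, i⟩ ⟨b, j⟩
  rw [expand_apply]
  simp only [Matrix.compRingEquiv_apply, Matrix.comp_apply,
    Matrix.scalar_apply, Matrix.diagonal_apply, Matrix.smul_apply, Matrix.one_apply]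
  by_cases h : a = b
  · subst h; simp
  · simp [h]

lemma bJ_pow {F : Type} [Field F] (n k M : ℕ) (A : Matrix (Fin k) (Fin k) F) (hA : IsUnit A)
    (hM : (M : F) ≠ 0) : ConjGL (bJ n k A ^ M) (bJ n k (A ^ M)) := by
  obtain ⟨h, h1, h2⟩ := exists_h (X : F[X]) M
  have e := conjP_intertwine n h ((X : F[X]) ^ M)
  rw [← h1] at e
  simp only [map_pow, map_add, aeval_X, aeval_C] at e
  rw [← map_pow, add_comm (shiftN _ n)] at e
  have e' := congrArg (expand n k A) e
  rw [map_mul, map_mul, map_pow, expand_jordan, expand_jordan] at e'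
  simp only [map_pow, aeval_X] at e'
  refine conj_of ?_ e'
  have d := congrArg (expand n k A) (Matrix.mul_adjugate (conjP n (X * h)))
  rw [map_mul] at d
  have u : IsUnit (expand n k A ((conjP n (X * h)).det • 1)) := by
    rw [conjP_det, h2, Finset.prod_pow_eq_pow_sum, expand_smul]
    refine (IsUnit.map (Matrix.scalar (Fin n)) ?_).map (Matrix.compRingEquiv (Fin n) (Fin k) F)
    rw [map_pow, map_mul, map_pow, aeval_X]
    refine IsUnit.pow _ (IsUnit.mul ?_ (hA.pow _))
    have := (IsUnit.mk0 (M : F) hM).map (algebraMap F (Matrix (Fin k) (Fin k) F))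
    simpa only [map_natCast] using this
  rw [← d] at u
  exact isUnit_of_mul_isUnit_left u

theorem statement8 (p ℓ q : ℕ) (hp : p.Prime) (hℓ : 0 < ℓ) (hq : q = p ^ ℓ)
    (F : Type) [Field F] [Fintype F] (hF : Fintype.card F = q ^ 2)
    (M : ℕ) (hM : 2 ≤ M) (hcop : Nat.gcd M q = 1)
    (k : ℕ) (f g : F[X]) (hfm : f.Monic) (hgm : g.Monic)
    (hfd : f.natDegree = k) (hgd : g.natDegree = k)
    (hf0 : f.coeff 0 ≠ 0) (hg0 : g.coeff 0 ≠ 0)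
    (hconj1 : ConjGL (companionMat k f ^ M) (companionMat k g)) :
    ∀ n : ℕ, 1 ≤ n → ConjGL (blockJordan k n f ^ M) (blockJordan k n g) := by
  intro n _
  have hM0 : (M : F) ≠ 0 := by
    intro h0
    have hd := (CharP.cast_eq_zero_iff F (ringChar F) M).1 h0
    obtain ⟨m, hpr, hc⟩ := FiniteField.card F (ringChar F)
    have h3 : ringChar F ∣ q ^ 2 := by
      rw [← hF, hc]; exact dvd_pow_self _ m.2.ne'
    have h4 := Nat.dvd_gcd hd (hpr.dvd_of_dvd_pow h3)
    rw [hcop] at h4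
    exact hpr.one_lt.ne' (Nat.dvd_one.1 h4)
  obtain ⟨P, hP, hPe⟩ := hconj1
  obtain ⟨Q1, hQ1, e1⟩ := bJ_pow n k M _ (companion_isUnit k f hf0) hM0
  obtain ⟨Q2, hQ2, e2⟩ := bJ_conj n k (companionMat k f ^ M) P hP
  refine ⟨Q2 * Q1, hQ2.mul hQ1, ?_⟩
  rw [← hPe] at e2
  change bJ n k _ = _ * bJ n k _ ^ M * _
  rw [e2, e1, Matrix.mul_inv_rev]
  simp only [Matrix.mul_assoc]
end
end

section
/- Let p be a prime, q a power of p, and M a prime with gcd(M,q) = 1. Let f be a monic irreducible polynomial of degree d over F_{q^2} with f(0) ≠ 0. Then either f(x^M) has an irreducible factor of degree d over F_{q^2} (i.e., f is an M-power polynomial), or f(x^M) is irreducible over F_{q^2}. -/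
open Polynomial Matrix

noncomputable section

/-- for a prime `M` coprime to `q` and `f` monic irreducible of degree `d`
over `F_{q^2}` with `f(0) ≠ 0`, either `f(x^M)` has an irreducible factor of degree `d`,
or `f(x^M)` is irreducible. -/
theorem statement12 (p ℓ q : ℕ) (hp : p.Prime) (hℓ : 0 < ℓ) (hq : q = p ^ ℓ)
    (M : ℕ) (hMp : M.Prime) (hcop : Nat.gcd M q = 1)
    (F : Type) [Field F] [Fintype F] (hF : Fintype.card F = q ^ 2)
    (f : F[X]) (hfm : f.Monic) (hfi : Irreducible f)
    (d : ℕ) (hd : 1 ≤ d) (hfd : f.natDegree = d) (hf0 : f.coeff 0 ≠ 0) :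
    (∃ h : F[X], Irreducible h ∧ h.natDegree = d ∧ h ∣ f.comp (X ^ M)) ∨
      Irreducible (f.comp (X ^ M)) := by
  by_cases hex : ∃ (E : Type) (_ : Field E) (_ : Algebra F E) (x : E) (_ : minpoly F x = f)
      (b : IntermediateField.adjoin F {x}), b ^ M = IntermediateField.AdjoinSimple.gen F x
  · left
    obtain ⟨E, _, _, x, hx, b, hb⟩ := hex
    have hxi : IsIntegral F x := by
      by_contra hn
      rw [minpoly.eq_zero hn] at hx
      exact hfi.ne_zero hx.symm
    have : FiniteDimensional F (IntermediateField.adjoin F {x}) :=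
      IntermediateField.adjoin.finiteDimensional hxi
    have hbi : IsIntegral F b := IsIntegral.of_finite F b
    refine ⟨minpoly F b, minpoly.irreducible hbi, ?_, ?_⟩
    · have hg : minpoly F (IntermediateField.AdjoinSimple.gen F x) = f := by
        rw [IntermediateField.minpoly_gen, hx]
      apply le_antisymm
      · have h1 := minpoly.natDegree_le (A := F) b
        rwa [IntermediateField.adjoin.finrank hxi, hx, hfd] at h1
      · have hle : IntermediateField.adjoin F {IntermediateField.AdjoinSimple.gen F x} ≤
            IntermediateField.adjoin F {b} := by
          rw [IntermediateField.adjoin_simple_le_iff, ← hb]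
          exact pow_mem (IntermediateField.mem_adjoin_simple_self F b) M
        have h2 := IntermediateField.finrank_le_of_le_right hle
        rwa [IntermediateField.adjoin.finrank hbi,
          IntermediateField.adjoin.finrank (IsIntegral.of_finite F _), hg, hfd] at h2
    · apply minpoly.dvd
      rw [aeval_comp, map_pow, aeval_X, hb, ← hx,
        ← IntermediateField.minpoly_gen F x]
      exact minpoly.aeval _ _
  · right
    refine irreducible_comp hfm (monic_X_pow M) hfi ?_
    intro E _ _ x hx
    simp only [Polynomial.map_pow, map_X]
    refine X_pow_sub_C_irreducible_of_prime hMp fun b hb => hex ⟨E, _, _, x, hx, b, hb⟩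
end
end
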